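/- Let E be a weakly sequentially complete separable Banach space that has a besselian Schauder frame. Then there exists a Banach space W possessing an unconditional Schauder basis and a linear isometry T : E → W whose range T(E) is a closed complemented subspace of W (so E is isometrically isomorphic to a complemented subspace of W). -/

import Mathlib

open Filter Topology

/-- `((a n, b n))` is a Schauder frame of `X`: the partial sums `∑_{j<n} b j x • a j`
converge in norm to `x` for every `x ∈ X`. -/
def IsSchauderFrame {X : Type*} [NormedAddCommGroup X] [NormedSpace ℝ X]
    (a : ℕ → X) (b : ℕ → X →L[ℝ] ℝ) : Prop :=
  ∀ x : X, Tendsto (fun n => ∑ j ∈ Finset.range n, b j x • a j) atTop (𝓝 x)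

/-- `((a n, b n))` is a besselian pair of `X`: there is `A > 0` such that
`∑ |b n x| |y (a n)| ≤ A ‖x‖ ‖y‖` for all `x ∈ X`, `y ∈ X*`. -/
def IsBesselianPair {X : Type*} [NormedAddCommGroup X] [NormedSpace ℝ X]
    (a : ℕ → X) (b : ℕ → X →L[ℝ] ℝ) : Prop :=
  ∃ A > (0 : ℝ), ∀ (x : X) (y : X →L[ℝ] ℝ),
    Summable (fun n => |b n x| * |y (a n)|) ∧
    ∑' n, |b n x| * |y (a n)| ≤ A * ‖x‖ * ‖y‖

/-- A besselian Schauder frame is a pair which is both a Schauder frame and a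
besselian pair. -/
def IsBesselianSchauderFrame {X : Type*} [NormedAddCommGroup X] [NormedSpace ℝ X]
    (a : ℕ → X) (b : ℕ → X →L[ℝ] ℝ) : Prop :=
  IsSchauderFrame a b ∧ IsBesselianPair a b

/-- `E` is weakly sequentially complete: every weakly Cauchy sequence is weakly
convergent. -/
def WeaklySequentiallyComplete (E : Type*) [NormedAddCommGroup E] [NormedSpace ℝ E] : Prop :=
  ∀ x : ℕ → E,
    (∀ y : E →L[ℝ] ℝ, ∃ l : ℝ, Tendsto (fun n => y (x n)) atTop (𝓝 l)) →
    ∃ x₀ : E, ∀ y : E →L[ℝ] ℝ, Tendsto (fun n => y (x n)) atTop (𝓝 (y x₀))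

universe u

/-- A bundled Banach space over `ℝ`. -/
structure BanachSpace where
  /-- the carrier type -/
  X : Type u
  [nacg : NormedAddCommGroup X]
  [nsp : NormedSpace ℝ X]
  [cplt : CompleteSpace X]

attribute [instance] BanachSpace.nacg BanachSpace.nsp BanachSpace.cplt

/-- `Z` has a Schauder basis: there are vectors `(e n)` and biorthogonal continuous
linear functionals `(f n)` such that every `z` is the norm limit of the partial sums
`∑_{j<n} f j z • e j`. -/
def HasSchauderBasis (Z : Type*) [NormedAddCommGroup Z] [NormedSpace ℝ Z] : Prop :=
  ∃ (e : ℕ → Z) (f : ℕ → Z →L[ℝ] ℝ),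
    (∀ i j, f i (e j) = if i = j then 1 else 0) ∧
    ∀ z : Z, Tendsto (fun n => ∑ j ∈ Finset.range n, f j z • e j) atTop (𝓝 z)

/-- `Z` has an unconditional Schauder basis: there are vectors `(e n)` and biorthogonal
continuous linear functionals `(f n)` such that for every `z` the family
`(f n z • e n)` is unconditionally summable with sum `z`. -/
def HasUnconditionalSchauderBasis (Z : Type*) [NormedAddCommGroup Z] [NormedSpace ℝ Z] : Prop :=
  ∃ (e : ℕ → Z) (f : ℕ → Z →L[ℝ] ℝ),
    (∀ i j, f i (e j) = if i = j then 1 else 0) ∧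
    ∀ z : Z, HasSum (fun n => f n z • e n) z

/-!
In a weakly sequentially complete space, the besselian inequality makes every subseries of
`∑ b n x • a n` weakly convergent, so by the Orlicz–Pettis theorem the series converges
unconditionally. The latter theorem is a Baire category argument on `2^ℕ`: the map `φ` sending a
set `M` of indices to the weak subsum over `M` is weakly continuous with separable range, hence of
small oscillation near some `M`, while `∑ n ∈ F, z n = φ (M ∪ F) - φ (M \ F)`.

An unconditionally convergent series `∑ c n • z n` is then encoded by the continuous function
`M ↦ ∑ n ∈ M, c n • z n` on `2^ℕ`. These functions form a closed subspace of `C(2^ℕ, X)`, of which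
the indicators of `{M | n ∈ M}` with values `z n` are an unconditional basis: as `M ∩ F → M`
uniformly in `M`, every `v` is the limit of `M ↦ v (M ∩ F)`, the partial sum over `F` of its
expansion. For `z = a`, evaluation at the full set is a left inverse of the map encoding `x ∈ E` by
its frame expansion. So this space is isomorphic to `E × K`, where `K` is the kernel of the
evaluation, and `E × K` contains `E` isometrically.
-/

section WeakTopology

variable {E : Type*} [NormedAddCommGroup E] [NormedSpace ℝ E]

theorem isClosed_toWeakSpace_image {s : Set E} (hconv : Convex ℝ s) (hs : IsClosed s) :
    IsClosed (toWeakSpace ℝ E '' s) := by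
  rw [← closure_eq_iff_isClosed, ← hconv.toWeakSpace_closure ℝ, hs.closure_eq]

theorem tendsto_toWeakSpace_iff {α : Type*} {l : Filter α} {u : α → E} {x : E} :
    Tendsto (fun k => toWeakSpace ℝ E (u k)) l (𝓝 (toWeakSpace ℝ E x)) ↔
      ∀ y : E →L[ℝ] ℝ, Tendsto (fun k => y (u k)) l (𝓝 (y x)) :=
  WeakBilin.tendsto_iff_forall_eval_tendsto _ fun _ _ h =>
    (SeparatingDual.eq_iff_forall_dual_eq (R := ℝ)).2 fun y => congr($h y)

theorem mem_of_isClosed_of_forall_dual_tendsto {s : Set E} (hconv : Convex ℝ s)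
    (hs : IsClosed s) {α : Type*} {l : Filter α} [l.NeBot] {u : α → E} {x : E}
    (hu : ∀ k, u k ∈ s) (h : ∀ y : E →L[ℝ] ℝ, Tendsto (fun k => y (u k)) l (𝓝 (y x))) :
    x ∈ s := by
  have := (isClosed_toWeakSpace_image hconv hs).mem_of_tendsto (tendsto_toWeakSpace_iff.2 h)
    (Eventually.of_forall fun k => Set.mem_image_of_mem _ (hu k))
  simpa using this

theorem exists_isOpen_forall_dist_lt_of_forall_dual_continuous {K : Type*} [TopologicalSpace K]
    [BaireSpace K] [Nonempty K] {φ : K → E} (hφ : ∀ y : E →L[ℝ] ℝ, Continuous fun k => y (φ k))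
    (hsep : TopologicalSpace.IsSeparable (Set.range φ)) {ε : ℝ} (hε : 0 < ε) :
    ∃ U : Set K, IsOpen U ∧ U.Nonempty ∧ ∀ k ∈ U, ∀ l ∈ U, dist (φ k) (φ l) < ε := by
  obtain ⟨c, hc, hsub⟩ := hsep
  have hclosed (x : E) : IsClosed (φ ⁻¹' Metric.closedBall x (ε / 3)) := by
    have hweak : Continuous fun k => toWeakSpace ℝ E (φ k) :=
      WeakBilin.continuous_of_continuous_eval _ hφ
    rw [← Set.preimage_image_eq (Metric.closedBall x (ε / 3)) (toWeakSpace ℝ E).injective]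
    exact (isClosed_toWeakSpace_image (convex_closedBall x _) Metric.isClosed_closedBall).preimage
      hweak
  have hcover : ⋃ x ∈ c, φ ⁻¹' Metric.closedBall x (ε / 3) = Set.univ := by
    refine Set.eq_univ_of_forall fun k => ?_
    obtain ⟨x, hx, hdist⟩ := Metric.mem_closure_iff.1 (hsub ⟨k, rfl⟩) (ε / 3) (by positivity)
    exact Set.mem_biUnion hx hdist.le
  obtain ⟨k₀, hk₀⟩ :=
    (dense_biUnion_interior_of_closed (fun x _ => hclosed x) hc hcover).nonempty
  obtain ⟨x, -, hx⟩ := Set.mem_iUnion₂.1 hk₀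
  refine ⟨_, isOpen_interior, ⟨k₀, hx⟩, fun k hk l hl => ?_⟩
  have hdist {k : K} (hk : k ∈ interior (φ ⁻¹' Metric.closedBall x (ε / 3))) :
      dist (φ k) x ≤ ε / 3 :=
    interior_subset (s := φ ⁻¹' _) hk
  linarith [dist_triangle_right (φ k) (φ l) x, hdist hk, hdist hl]

end WeakTopology

section CantorSpace

variable {ι : Type*}

/-- The retraction `M ↦ M ∩ F` of `ι → Bool`, a point `M` standing for the set `{n | M n}`. -/
def restrictFinset [DecidableEq ι] (F : Finset ι) : C(ι → Bool, ι → Bool) :=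
  ⟨fun M n => decide (n ∈ F) && M n, by fun_prop⟩

theorem tendsto_restrictFinset [DecidableEq ι] :
    Tendsto (restrictFinset (ι := ι)) atTop (𝓝 (ContinuousMap.id _)) := by
  rw [ContinuousMap.tendsto_iff_tendstoUniformly, tendstoUniformly_iff_tendsto, Pi.uniformity,
    tendsto_iInf]
  refine fun n => tendsto_comap_iff.2 fun u hu => ?_
  have hmem : ∀ᶠ F : Finset ι in atTop, n ∈ F := (eventually_ge_atTop {n}).mono (by simp)
  have : ∀ᶠ p : Finset ι × (ι → Bool) in atTop ×ˢ ⊤, n ∈ p.1 := hmem.prod_inl ⊤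
  refine mem_map.2 (mem_of_superset this fun p hp => ?_)
  simpa [restrictFinset, show n ∈ p.1 from hp] using refl_mem_uniformity hu

theorem exists_finset_forall_eqOn_mem {U : Set (ι → Bool)} (hU : IsOpen U) {M : ι → Bool}
    (hM : M ∈ U) : ∃ s : Finset ι, ∀ N : ι → Bool, (∀ n ∈ s, N n = M n) → N ∈ U := by
  obtain ⟨s, u, hu, hsub⟩ := isOpen_pi_iff.1 hU M hM
  exact ⟨s, fun N hN => hsub fun n hn => by rw [hN n hn]; exact (hu n hn).2⟩

/-- The indicator function of the clopen cylinder `{M | M n}`, with value `x` in place of `1`. -/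
def cylinderIndicator {X : Type*} [TopologicalSpace X] [Zero X] (n : ι) (x : X) :
    C(ι → Bool, X) :=
  ⟨fun M => if M n then x else 0,
    (continuous_of_discreteTopology (f := fun b : Bool => if b then x else 0)).comp
      (continuous_apply n)⟩

@[simp]
theorem cylinderIndicator_apply {X : Type*} [TopologicalSpace X] [Zero X] (n : ι) (x : X)
    (M : ι → Bool) : cylinderIndicator n x M = if M n then x else 0 :=
  rfl

theorem cylinderIndicator_comp_restrictFinset [DecidableEq ι] {X : Type*} [NormedAddCommGroup X]
    (n : ι) (x : X) (F : Finset ι) :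
    (cylinderIndicator n x).comp (restrictFinset F) =
      if n ∈ F then cylinderIndicator n x else 0 := by
  ext M
  by_cases hn : n ∈ F <;> simp [restrictFinset, hn]

theorem cylinderIndicator_smul {𝕜 X : Type*} [NormedField 𝕜] [NormedAddCommGroup X]
    [NormedSpace 𝕜 X] (n : ι) (c : 𝕜) (x : X) :
    cylinderIndicator n (c • x) = c • cylinderIndicator n x := by
  ext M
  simp

theorem summable_cylinderIndicator {X : Type*} [NormedAddCommGroup X] [CompleteSpace X]
    {z : ι → X} (hz : Summable z) : Summable fun n => cylinderIndicator n (z n) := by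
  rw [summable_iff_vanishing_norm] at hz ⊢
  intro ε hε
  obtain ⟨s, hs⟩ := hz ε hε
  refine ⟨s, fun F hF => (ContinuousMap.norm_lt_iff _ hε).2 fun M => ?_⟩
  have : (∑ n ∈ F, cylinderIndicator n (z n)) M = ∑ n ∈ F with M n, z n := by
    simp [Finset.sum_filter]
  rw [this]
  exact hs _ (hF.mono_left (Finset.filter_subset _ _))

end CantorSpace

section OrliczPettis

variable {E : Type*} [NormedAddCommGroup E] [NormedSpace ℝ E] {ι : Type*}

/-- The family `z` is unconditionally summable in the weak topology, with sum `x`. -/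
def HasWeakSum (z : ι → E) (x : E) : Prop :=
  ∀ y : E →L[ℝ] ℝ, HasSum (fun n => y (z n)) (y x)

theorem HasWeakSum.unique {z : ι → E} {x x' : E} (h : HasWeakSum z x) (h' : HasWeakSum z x') :
    x = x' :=
  (SeparatingDual.eq_iff_forall_dual_eq (R := ℝ)).2 fun y => (h y).unique (h' y)

theorem HasWeakSum.sub {z z' : ι → E} {x x' : E} (h : HasWeakSum z x) (h' : HasWeakSum z' x') :
    HasWeakSum (z - z') (x - x') := fun y => by
  simpa using (h y).sub (h' y)

theorem hasWeakSum_of_hasSum {z : ι → E} {x : E} (h : HasSum z x) : HasWeakSum z x :=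
  fun y => h.mapL y

theorem HasWeakSum.mem_submodule {z : ι → E} {x : E} (h : HasWeakSum z x) {S : Submodule ℝ E}
    (hS : IsClosed (S : Set E)) (hz : ∀ n, z n ∈ S) : x ∈ S :=
  mem_of_isClosed_of_forall_dual_tendsto S.convex hS
    (fun F : Finset ι => S.sum_mem fun n _ => hz n) fun y => by
      simpa only [map_sum, HasSum, SummationFilter.unconditional_filter] using h y

section Subseries

variable {z : ι → E} {φ : (ι → Bool) → E}

theorem continuous_dual_of_hasWeakSum_subseries
    (hφ : ∀ M, HasWeakSum (fun n => if M n then z n else 0) (φ M)) (y : E →L[ℝ] ℝ) :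
    Continuous fun M => y (φ M) := by
  have hsum : Summable fun n => y (z n) := by simpa using (hφ ⊤ y).summable
  convert (∑' n, cylinderIndicator n (y (z n))).continuous with M
  have := (summable_cylinderIndicator hsum).hasSum.mapL (ContinuousMap.evalCLM ℝ M)
  refine (hφ M y).unique (this.congr_fun fun n => ?_)
  cases h : M n <;> simp [h]

theorem isSeparable_range_of_hasWeakSum_subseries [Countable ι]
    (hφ : ∀ M, HasWeakSum (fun n => if M n then z n else 0) (φ M)) :
    TopologicalSpace.IsSeparable (Set.range φ) := by
  refine (Set.countable_range z).isSeparable.span (R := ℝ) |>.closure.mono ?_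
  rintro _ ⟨M, rfl⟩
  refine (hφ M).mem_submodule
    (Submodule.isClosed_topologicalClosure (Submodule.span ℝ (Set.range z))) fun n => ?_
  split_ifs
  · exact subset_closure (Submodule.subset_span ⟨n, rfl⟩)
  · exact zero_mem _

theorem sub_eq_sum_of_hasWeakSum_subseries [DecidableEq ι]
    (hφ : ∀ M, HasWeakSum (fun n => if M n then z n else 0) (φ M)) (M : ι → Bool)
    (F : Finset ι) :
    φ (fun n => n ∈ F || M n) - φ (fun n => n ∉ F && M n) = ∑ n ∈ F, z n := by
  refine ((hφ _).sub (hφ _)).unique ?_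
  have : HasSum (fun n => if n ∈ F then z n else 0) (∑ n ∈ F, z n) := by
    simpa +contextual using hasSum_sum_of_ne_finset_zero (s := F) (L := .unconditional ι)
      (f := fun n => if n ∈ F then z n else 0) fun n hn => if_neg hn
  convert hasWeakSum_of_hasSum this with n
  by_cases hn : n ∈ F <;> simp [hn]

end Subseries

/-- **Orlicz–Pettis theorem**. -/
theorem summable_of_forall_exists_hasWeakSum_subseries [CompleteSpace E] [Countable ι]
    {z : ι → E} (hz : ∀ M : ι → Bool, ∃ x, HasWeakSum (fun n => if M n then z n else 0) x) :
    Summable z := by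
  classical
  choose φ hφ using hz
  rw [summable_iff_vanishing_norm]
  intro ε hε
  obtain ⟨U, hU, ⟨M, hM⟩, hsmall⟩ := exists_isOpen_forall_dist_lt_of_forall_dual_continuous
    (continuous_dual_of_hasWeakSum_subseries hφ) (isSeparable_range_of_hasWeakSum_subseries hφ) hε
  obtain ⟨s, hs⟩ := exists_finset_forall_eqOn_mem hU hM
  refine ⟨s, fun F hF => ?_⟩
  have hsF {n : ι} (hn : n ∈ s) : n ∉ F := fun h => Finset.disjoint_left.1 hF h hn
  rw [← sub_eq_sum_of_hasWeakSum_subseries hφ M F, ← dist_eq_norm]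
  exact hsmall _ (hs _ fun n hn => by simp [hsF hn]) _ (hs _ fun n hn => by simp [hsF hn])

theorem WeaklySequentiallyComplete.summable_of_forall_dual_summable [CompleteSpace E]
    (hE : WeaklySequentiallyComplete E) {z : ℕ → E}
    (hz : ∀ y : E →L[ℝ] ℝ, Summable fun n => y (z n)) : Summable z := by
  refine summable_of_forall_exists_hasWeakSum_subseries fun M => ?_
  have hsum (y : E →L[ℝ] ℝ) : Summable fun n => y (if M n then z n else 0) := by
    refine ((hz y).indicator {n | M n}).congr fun n => ?_
    by_cases h : M n <;> simp [h]
  have hlim (y : E →L[ℝ] ℝ) := (hsum y).hasSum.tendsto_sum_nat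
  simp only [← map_sum] at hlim
  obtain ⟨x, hx⟩ := hE _ fun y => ⟨_, hlim y⟩
  exact ⟨x, fun y => tendsto_nhds_unique (hlim y) (hx y) ▸ (hsum y).hasSum⟩

theorem IsBesselianSchauderFrame.hasSum [CompleteSpace E] (hE : WeaklySequentiallyComplete E)
    {a : ℕ → E} {b : ℕ → E →L[ℝ] ℝ} (h : IsBesselianSchauderFrame a b) (x : E) :
    HasSum (fun n => b n x • a n) x := by
  obtain ⟨hframe, A, -, hbessel⟩ := h
  have hsum : Summable fun n => b n x • a n := hE.summable_of_forall_dual_summable fun y => by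
    simpa [← summable_abs_iff, abs_mul] using (hbessel x y).1
  exact hsum.hasSum_iff_tendsto_nat.2 (hframe x)

end OrliczPettis

section SubseriesSpace

variable {𝕜 ι X : Type*} [NontriviallyNormedField 𝕜] [NormedAddCommGroup X] [NormedSpace 𝕜 X]
  {z : ι → X}

theorem exists_continuousLinearMap_forall_hasSum {E : Type*} [NormedAddCommGroup E]
    [NormedSpace 𝕜 E] [CompleteSpace E] [Countable ι] {b : ι → E →L[𝕜] 𝕜}
    (h : ∀ x, Summable fun n => b n x • z n) :
    ∃ T : E →L[𝕜] X, ∀ x, HasSum (fun n => b n x • z n) (T x) :=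
  ⟨continuousLinearMapOfTendsto (l := atTop)
    (g := fun F : Finset ι => ∑ n ∈ F, (b n).smulRight (z n))
    (f := fun x => ∑' n, b n x • z n)
    (tendsto_pi_nhds.2 fun x => by simpa [HasSum] using (h x).hasSum),
    fun x => (h x).hasSum⟩

variable [DecidableEq ι] {y : ι → X →L[𝕜] 𝕜}

/-- The functional `v ↦ y n (v {n})` on `C(ι → Bool, X)`. If `y n (z n) = 1` for all `n`, these
functionals are biorthogonal to the functions `cylinderIndicator n (z n)`. -/
def cylinderCoord (y : ι → X →L[𝕜] 𝕜) (n : ι) : C(ι → Bool, X) →L[𝕜] 𝕜 :=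
  y n ∘L ContinuousMap.evalCLM 𝕜 fun m => decide (m = n)

theorem cylinderCoord_cylinderIndicator (m n : ι) (x : X) :
    cylinderCoord y m (cylinderIndicator n x) = if m = n then y m x else 0 := by
  obtain rfl | h := eq_or_ne m n
  · simp [cylinderCoord]
  · simp [cylinderCoord, h, h.symm]

/-- If `y n (z n) = 1` for all `n`, the space of the functions `M ↦ ∑ n ∈ M, c n • z n` with
`∑ c n • z n` unconditionally summable. It is encoded by closed conditions on `v : C(ι → Bool, X)`:
on the subsets of each finite set `F`, `v` is given by its coordinates `c n = cylinderCoord y n v`.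
-/
def subseriesSpace (z : ι → X) (y : ι → X →L[𝕜] 𝕜) : Submodule 𝕜 C(ι → Bool, X) :=
  ⨅ F : Finset ι, (ContinuousMap.compCLM 𝕜 X (restrictFinset F) -
    ∑ n ∈ F, (cylinderCoord y n).smulRight (cylinderIndicator n (z n))).ker

theorem mem_subseriesSpace {v : C(ι → Bool, X)} :
    v ∈ subseriesSpace z y ↔ ∀ F : Finset ι,
      v.comp (restrictFinset F) = ∑ n ∈ F, cylinderCoord y n v • cylinderIndicator n (z n) := by
  simp [subseriesSpace, sub_eq_zero]

theorem isClosed_subseriesSpace :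
    IsClosed (subseriesSpace z y : Set C(ι → Bool, X)) := by
  simp only [subseriesSpace, Submodule.coe_iInf]
  exact isClosed_iInter fun F => ContinuousLinearMap.isClosed_ker _

theorem cylinderIndicator_mem_subseriesSpace (hzy : ∀ n, y n (z n) = 1) (n : ι) :
    cylinderIndicator n (z n) ∈ subseriesSpace z y := by
  refine mem_subseriesSpace.2 fun F => ?_
  simp [cylinderIndicator_comp_restrictFinset, cylinderCoord_cylinderIndicator, hzy]

theorem hasSum_of_mem_subseriesSpace {v : C(ι → Bool, X)} (hv : v ∈ subseriesSpace z y) :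
    HasSum (fun n => cylinderCoord y n v • cylinderIndicator n (z n)) v := by
  have := (ContinuousMap.continuous_postcomp v).tendsto _ |>.comp tendsto_restrictFinset
  simpa [HasSum, Function.comp_def, mem_subseriesSpace.1 hv] using this

/-- The functions `cylinderIndicator n (z n)` as an unconditional basis of `subseriesSpace z y`. -/
noncomputable def subseriesBasis (hzy : ∀ n, y n (z n) = 1) :
    UnconditionalSchauderBasis ι 𝕜 (subseriesSpace z y) where
  basis n := ⟨cylinderIndicator n (z n), cylinderIndicator_mem_subseriesSpace hzy n⟩
  coord n := cylinderCoord y n ∘L (subseriesSpace z y).subtypeL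
  ortho m n := by
    by_cases h : m = n <;> simp [cylinderCoord_cylinderIndicator, hzy, h]
  expansion v := by
    simpa [HasSum, tendsto_subtype_rng] using hasSum_of_mem_subseriesSpace v.2

theorem exists_rightInverse_subseriesSpace {E : Type*} [NormedAddCommGroup E] [NormedSpace 𝕜 E]
    [CompleteSpace E] [CompleteSpace X] [Countable ι] (hzy : ∀ n, y n (z n) = 1)
    {b : ι → E →L[𝕜] 𝕜} (hb : ∀ x, Summable fun n => b n x • z n) {π : X →L[𝕜] E}
    (hπ : ∀ x, HasSum (fun n => b n x • π (z n)) x) :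
    ∃ (S : subseriesSpace z y →L[𝕜] E) (T : E →L[𝕜] subseriesSpace z y),
      Function.RightInverse T S := by
  obtain ⟨T, hT⟩ := exists_continuousLinearMap_forall_hasSum (b := b)
    (z := fun n => cylinderIndicator n (z n)) fun x => by
      simpa only [cylinderIndicator_smul] using summable_cylinderIndicator (hb x)
  have hTmem (x : E) : T x ∈ subseriesSpace z y :=
    isClosed_subseriesSpace.mem_of_tendsto (hT x) <| Eventually.of_forall fun F =>
      sum_mem fun n _ => Submodule.smul_mem _ _ (cylinderIndicator_mem_subseriesSpace hzy n)
  let S := π ∘L ContinuousMap.evalCLM 𝕜 (⊤ : ι → Bool)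
  refine ⟨S ∘L (subseriesSpace z y).subtypeL, T.codRestrict _ hTmem, fun x => ?_⟩
  have hST : HasSum (fun n => b n x • π (z n)) (S (T x)) := by
    simpa [S] using (hT x).mapL S
  exact hST.unique (hπ x)

end SubseriesSpace

section Complementation

variable {E : Type u} [NormedAddCommGroup E] [NormedSpace ℝ E]

theorem HasUnconditionalSchauderBasis.of_basis {Z : Type*}
    [NormedAddCommGroup Z] [NormedSpace ℝ Z] (B : UnconditionalSchauderBasis ℕ ℝ Z) :
    HasUnconditionalSchauderBasis Z :=
  ⟨B, B.coord, fun i j => by simp [B.ortho, Pi.single_apply], B.expansion⟩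

theorem HasUnconditionalSchauderBasis.of_equiv {Z W : Type*} [NormedAddCommGroup Z]
    [NormedSpace ℝ Z] [NormedAddCommGroup W] [NormedSpace ℝ W]
    (h : HasUnconditionalSchauderBasis Z) (Φ : Z ≃L[ℝ] W) : HasUnconditionalSchauderBasis W := by
  obtain ⟨e, f, hef, hsum⟩ := h
  refine ⟨fun n => Φ (e n), fun n => f n ∘L Φ.symm, fun i j => by simpa using hef i j, fun w => ?_⟩
  simpa using (hsum (Φ.symm w)).mapL Φ.toContinuousLinearMap

theorem exists_hasUnconditionalSchauderBasis_rightInverse [CompleteSpace E] {a : ℕ → E}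
    {b : ℕ → E →L[ℝ] ℝ} (h : ∀ x, HasSum (fun n => b n x • a n) x) :
    ∃ (Z : BanachSpace.{u}) (S : Z.X →L[ℝ] E) (T : E →L[ℝ] Z.X),
      HasUnconditionalSchauderBasis Z.X ∧ Function.RightInverse T S := by
  classical
  -- The second coordinate makes every `z n` nonzero, so that it can span a basis direction.
  let z (n : ℕ) : E × ℝ := (a n, if a n = 0 then 1 else 0)
  let b' (n : ℕ) : E →L[ℝ] ℝ := if a n = 0 then 0 else b n
  have hz (n : ℕ) : z n ≠ 0 := by by_cases ha : a n = 0 <;> simp [z, ha]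
  have hb' (n : ℕ) (x : E) : b' n x • z n = (b n x • a n, 0) := by
    by_cases ha : a n = 0 <;> simp [b', z, ha, Prod.zero_eq_mk]
  choose y hzy using fun n => SeparatingDual.exists_eq_one (R := ℝ) (hz n)
  have := isClosed_subseriesSpace (z := z) (y := y).completeSpace_coe
  obtain ⟨S, T, hST⟩ := exists_rightInverse_subseriesSpace hzy (b := b')
    (π := ContinuousLinearMap.fst ℝ E ℝ)
    (fun x => by simpa only [hb'] using ((h x).prodMk hasSum_zero).summable)
    (fun x => (h x).congr_fun fun n => congr($(hb' n x).1))
  exact ⟨⟨subseriesSpace z y⟩, S, T, .of_basis (subseriesBasis hzy), hST⟩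

theorem HasUnconditionalSchauderBasis.exists_isometric_complemented [CompleteSpace E]
    {Z : Type u} [NormedAddCommGroup Z] [NormedSpace ℝ Z] [CompleteSpace Z]
    (hZ : HasUnconditionalSchauderBasis Z) {S : Z →L[ℝ] E} {R : E →L[ℝ] Z}
    (hSR : Function.RightInverse R S) :
    ∃ W : BanachSpace.{u}, HasUnconditionalSchauderBasis W.X ∧
      ∃ T : E →ₗᵢ[ℝ] W.X,
        IsClosed (Set.range T) ∧
        ∃ P : W.X →L[ℝ] W.X, (∀ z, P (P z) = P z) ∧ Set.range P = Set.range T := by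
  let inl : E →ₗᵢ[ℝ] E × S.ker := ⟨LinearMap.inl ℝ E S.ker, fun x => by simp [Prod.norm_def]⟩
  refine ⟨⟨E × S.ker⟩, hZ.of_equiv (.equivOfRightInverse S R hSR), inl,
    inl.isometry.isClosedEmbedding.isClosed_range,
    inl.toContinuousLinearMap ∘L .fst ℝ E S.ker, fun w => rfl, ?_⟩
  exact Prod.fst_surjective.range_comp inl

end Complementation

/-- If a weakly sequentially complete separable Banach space `E` has a besselian
Schauder frame, then there is a Banach space `W` with an unconditional Schauder basis
and a linear isometry `T : E → W` whose range is a closed complemented subspace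
of `W`. -/
theorem besselianSchauderFrame_implies_isometric_complemented_in_unconditional_basis_space
    {E : Type u} [NormedAddCommGroup E] [NormedSpace ℝ E] [CompleteSpace E]
    [TopologicalSpace.SeparableSpace E]
    (hE : WeaklySequentiallyComplete E)
    (a : ℕ → E) (b : ℕ → E →L[ℝ] ℝ) (h : IsBesselianSchauderFrame a b) :
    ∃ W : BanachSpace.{u}, HasUnconditionalSchauderBasis W.X ∧
      ∃ T : E →ₗᵢ[ℝ] W.X,
        IsClosed (Set.range T) ∧
        ∃ P : W.X →L[ℝ] W.X, (∀ z, P (P z) = P z) ∧ Set.range P = Set.range T := by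
  obtain ⟨Z, S, R, hZ, hSR⟩ := exists_hasUnconditionalSchauderBasis_rightInverse (h.hasSum hE)
  exact hZ.exists_isometric_complemented hSR
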